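/- arXiv:1712.09948 — 5 statements merged into one kernel-verified Lean document; each statement's English description precedes it below -/
import Mathlib

section
/- Let L be a real symmetric positive semidefinite n×n matrix, let x ∈ ℝ^n, and set y = (I+L)^{-1}x. Then yᵀy + yᵀLy = xᵀ(I+L)^{-1}x. In particular, for a graph Laplacian L with mean-centered innate opinions s̄ and z̄ = (I+L)^{-1}s̄, the polarization-disagreement index satisfies z̄ᵀz̄ + z̄ᵀLz̄ = s̄ᵀ(I+L)^{-1}s̄. -/
open Matrix BigOperators

theorem polarization_disagreement_index_eq {n : ℕ} (L : Matrix (Fin n) (Fin n) ℝ)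
    (hL : L.PosSemidef) (x y : Fin n → ℝ) (hy : y = (1 + L)⁻¹ *ᵥ x) :
    y ⬝ᵥ y + y ⬝ᵥ (L *ᵥ y) = x ⬝ᵥ ((1 + L)⁻¹ *ᵥ x) := by
  -- `1 + L` is positive definite, so the matrix inverse is a genuine one and `(1 + L) y = x`.
  have hpd : (1 + L).PosDef := Matrix.PosDef.one.add_posSemidef hL
  have hdet : IsUnit (1 + L).det := (Matrix.isUnit_iff_isUnit_det _).mp hpd.isUnit
  have hx : (1 + L) *ᵥ y = x := by
    rw [hy, mulVec_mulVec, mul_nonsing_inv _ hdet, one_mulVec]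
  calc y ⬝ᵥ y + y ⬝ᵥ (L *ᵥ y) = y ⬝ᵥ ((1 + L) *ᵥ y) := by
        rw [add_mulVec, one_mulVec, dotProduct_add]
    _ = x ⬝ᵥ ((1 + L)⁻¹ *ᵥ x) := by rw [hx, ← hy, dotProduct_comm]
end

section
/- Fix n ≥ 1 and s ∈ ℝ^n. Let N = n(n−1)/2, let B ∈ ℝ^{n×N} be the signed incidence matrix of the complete graph on n nodes (the column indexed by the pair {i,j} with i < j is e_i − e_j), and for w ∈ ℝ^N let L(w) = B·diag(w)·Bᵀ. Then the function f(w) = sᵀ(I + L(w))^{-1}s is convex on the set {w ∈ ℝ^N : w ≥ 0}. Consequently, the polarization-disagreement index z̄ᵀz̄ + z̄ᵀLz̄ of the Friedkin–Johnsen equilibrium is a convex function of the edge weights of the graph. -/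
open Matrix BigOperators

/-!
The function `A ↦ s ⬝ᵥ (A⁻¹ *ᵥ s)` on positive definite matrices is a pointwise supremum of affine
functions of `A`: it equals `max_x (2 * (s ⬝ᵥ x) - x ⬝ᵥ (A *ᵥ x))`, the maximum being attained at
`x = A⁻¹ *ᵥ s` (`two_mul_dotProduct_sub_le`). Since `w ↦ 1 + B * diagonal w * Bᵀ` is affine and
takes positive definite values on the nonnegative orthant (`posDef_one_add_mul_diagonal`), the
composite is convex.
-/

/-- The bound comes from expanding `0 ≤ (x - y) ⬝ᵥ (A *ᵥ (x - y))` at `y = A⁻¹ *ᵥ s`. -/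
lemma two_mul_dotProduct_sub_le {m : Type*} [Fintype m] [DecidableEq m] {A : Matrix m m ℝ}
    (hA : A.PosDef) (s x : m → ℝ) :
    2 * (s ⬝ᵥ x) - x ⬝ᵥ (A *ᵥ x) ≤ s ⬝ᵥ (A⁻¹ *ᵥ s) := by
  have hy : A *ᵥ (A⁻¹ *ᵥ s) = s := by
    rw [mulVec_mulVec, mul_nonsing_inv _ ((isUnit_iff_isUnit_det A).mp hA.isUnit), one_mulVec]
  set y := A⁻¹ *ᵥ s
  have hsymm : y ⬝ᵥ (A *ᵥ x) = s ⬝ᵥ x := by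
    have hT : Aᵀ = A := by simpa using hA.isHermitian.eq
    rw [dotProduct_mulVec, ← mulVec_transpose, hT, hy]
  have h : 0 ≤ (x - y) ⬝ᵥ (A *ᵥ (x - y)) := by
    simpa using hA.posSemidef.dotProduct_mulVec_nonneg (x - y)
  rw [mulVec_sub, hy, sub_dotProduct, dotProduct_sub, dotProduct_sub, hsymm, dotProduct_comm x s,
    dotProduct_comm y s] at h
  linarith

lemma posDef_one_add_mul_diagonal {m e : Type*} [Fintype m] [DecidableEq m] [Fintype e]
    [DecidableEq e] (B : Matrix m e ℝ) {w : e → ℝ} (hw : ∀ i, 0 ≤ w i) :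
    (1 + B * diagonal w * Bᵀ).PosDef := by
  refine PosDef.one.add_posSemidef ?_
  simpa using (PosSemidef.diagonal hw).mul_mul_conjTranspose_same B

theorem objective_convex_in_edge_weights {n : ℕ} (hn : 1 ≤ n) (s : Fin n → ℝ)
    (B : Matrix (Fin n) {p : Fin n × Fin n // p.1 < p.2} ℝ)
    (hB : ∀ i e, B i e = (if i = e.val.1 then (1 : ℝ) else 0) - (if i = e.val.2 then 1 else 0)) :
    ConvexOn ℝ {w : {p : Fin n × Fin n // p.1 < p.2} → ℝ | ∀ e, 0 ≤ w e}
      (fun w => s ⬝ᵥ ((1 + B * Matrix.diagonal w * Bᵀ)⁻¹ *ᵥ s)) := by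
  have hconv : Convex ℝ {w : {p : Fin n × Fin n // p.1 < p.2} → ℝ | ∀ e, 0 ≤ w e} :=
    convex_Ici (0 : {p : Fin n × Fin n // p.1 < p.2} → ℝ)
  refine ⟨hconv, fun u hu v hv a b ha hb hab => ?_⟩
  have hA := posDef_one_add_mul_diagonal B (hconv hu hv ha hb hab)
  have haff : 1 + B * diagonal (a • u + b • v) * Bᵀ
      = a • (1 + B * diagonal u * Bᵀ) + b • (1 + B * diagonal v * Bᵀ) := by
    have h1 : (1 : Matrix (Fin n) (Fin n) ℝ) = a • 1 + b • 1 := by rw [← add_smul, hab, one_smul]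
    have hd : diagonal (a • u + b • v) = a • diagonal u + b • diagonal v := by
      rw [← diagonal_smul, ← diagonal_smul, diagonal_add]; rfl
    rw [hd, Matrix.mul_add, Matrix.add_mul, Matrix.mul_smul, Matrix.mul_smul, Matrix.smul_mul,
      Matrix.smul_mul, smul_add, smul_add]
    nth_rewrite 1 [h1]
    abel
  have hu' := two_mul_dotProduct_sub_le (posDef_one_add_mul_diagonal B hu) s
  have hv' := two_mul_dotProduct_sub_le (posDef_one_add_mul_diagonal B hv) s
  simp only [smul_eq_mul]
  set A := 1 + B * diagonal (a • u + b • v) * Bᵀ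
  have hx : A *ᵥ (A⁻¹ *ᵥ s) = s := by
    rw [mulVec_mulVec, mul_nonsing_inv _ ((isUnit_iff_isUnit_det A).mp hA.isUnit), one_mulVec]
  -- Both affine minorants are evaluated at the maximizer `x` for the intermediate weights.
  generalize A⁻¹ *ᵥ s = x at hx ⊢
  have hq : s ⬝ᵥ x = a * (x ⬝ᵥ ((1 + B * diagonal u * Bᵀ) *ᵥ x))
      + b * (x ⬝ᵥ ((1 + B * diagonal v * Bᵀ) *ᵥ x)) := by
    rw [dotProduct_comm, ← hx, haff, add_mulVec, dotProduct_add, smul_mulVec, smul_mulVec,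
      dotProduct_smul, dotProduct_smul, smul_eq_mul, smul_eq_mul]
  have h1 := mul_le_mul_of_nonneg_left (hu' x) ha
  have h2 := mul_le_mul_of_nonneg_left (hv' x) hb
  have h3 : a * (s ⬝ᵥ x) + b * (s ⬝ᵥ x) = s ⬝ᵥ x := by rw [← add_mul, hab, one_mul]
  linarith
end

section
/- Let L₁ = [[1,−1,0],[−1,2,−1],[0,−1,1]] and L₂ = [[2,−1,−1],[−1,1,0],[−1,0,1]] (the Laplacians of two paths on 3 nodes), let λ = 1/2, and define f(L) = (I+L)^{-1}·L·(I+L)^{-1}. Then the matrix λ·f(L₁) + (1−λ)·f(L₂) − f(λL₁ + (1−λ)L₂) is NOT positive semidefinite; hence the map L ↦ (I+L)^{-1}L(I+L)^{-1} is not matrix-convex on graph Laplacians. -/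
/-!
Write `A` for the midpoint `(L₁ + L₂) / 2`. The matrix `½ f(L₁) + ½ f(L₂) - f(A)` has a negative
quadratic form at `x = (1, 1, -2)`. This vector is an eigenvector of `A` with eigenvalue `3/2`, so
`xᵀ f(A) x = 6 · (3/2) / (5/2)² = 36/25`. On the other hand `x` splits over the eigenvectors of
`L₁` with eigenvalues `1` and `3` into parts of squared norm `9/2` and `3/2`, so
`xᵀ f(L₁) x = (9/2) / 4 + (3/2) · 3/16 = 45/32`, and `xᵀ f(L₂) x` has the same value because
exchanging the first two nodes exchanges `L₁` and `L₂` and fixes `x`. Finally `45/32 < 36/25`.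

To evaluate `f`, the inverses `(1 + L)⁻¹` are given explicitly. The failure of matrix convexity
follows, since `L₁` and `L₂` are graph Laplacians and `1/2 ∈ (0, 1)`.
-/

open Matrix BigOperators

/-- The map `f(L) = (I+L)⁻¹ L (I+L)⁻¹` from the paper's non-convexity counterexample. -/
noncomputable def fMap (L : Matrix (Fin 3) (Fin 3) ℝ) : Matrix (Fin 3) (Fin 3) ℝ :=
  (1 + L)⁻¹ * L * (1 + L)⁻¹

theorem fMap_eq_of_mul_eq_one {L B : Matrix (Fin 3) (Fin 3) ℝ} (h : (1 + L) * B = 1) :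
    fMap L = B * L * B := by
  rw [fMap, Matrix.inv_eq_right_inv h]

theorem fMap_path₁ : fMap !![1, -1, 0; -1, 2, -1; 0, -1, 1] =
    !![5/8, 1/4, 1/8; 1/4, 1/2, 1/4; 1/8, 1/4, 5/8] * !![1, -1, 0; -1, 2, -1; 0, -1, 1] *
      !![5/8, 1/4, 1/8; 1/4, 1/2, 1/4; 1/8, 1/4, 5/8] := by
  apply fMap_eq_of_mul_eq_one
  rw [Matrix.one_fin_three]
  ext i j
  fin_cases i <;> fin_cases j <;>
    norm_num [Matrix.mul_apply, Fin.sum_univ_succ]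

theorem fMap_path₂ : fMap !![2, -1, -1; -1, 1, 0; -1, 0, 1] =
    !![1/2, 1/4, 1/4; 1/4, 5/8, 1/8; 1/4, 1/8, 5/8] * !![2, -1, -1; -1, 1, 0; -1, 0, 1] *
      !![1/2, 1/4, 1/4; 1/4, 5/8, 1/8; 1/4, 1/8, 5/8] := by
  apply fMap_eq_of_mul_eq_one
  rw [Matrix.one_fin_three]
  ext i j
  fin_cases i <;> fin_cases j <;>
    norm_num [Matrix.mul_apply, Fin.sum_univ_succ]

theorem fMap_midpoint : fMap ((1 / 2 : ℝ) • !![1, -1, 0; -1, 2, -1; 0, -1, 1]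
      + (1 / 2 : ℝ) • !![2, -1, -1; -1, 1, 0; -1, 0, 1]) =
    !![19/35, 9/35, 1/5; 9/35, 19/35, 1/5; 1/5, 1/5, 3/5] *
      ((1 / 2 : ℝ) • !![1, -1, 0; -1, 2, -1; 0, -1, 1]
        + (1 / 2 : ℝ) • !![2, -1, -1; -1, 1, 0; -1, 0, 1]) *
      !![19/35, 9/35, 1/5; 9/35, 19/35, 1/5; 1/5, 1/5, 3/5] := by
  apply fMap_eq_of_mul_eq_one
  rw [Matrix.one_fin_three]
  ext i j
  fin_cases i <;> fin_cases j <;>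
    norm_num [Matrix.mul_apply, Fin.sum_univ_succ]

theorem not_posSemidef_midpoint_gap :
    ¬ ((1 / 2 : ℝ) • fMap !![1, -1, 0; -1, 2, -1; 0, -1, 1]
        + (1 / 2 : ℝ) • fMap !![2, -1, -1; -1, 1, 0; -1, 0, 1]
        - fMap ((1 / 2 : ℝ) • !![1, -1, 0; -1, 2, -1; 0, -1, 1]
            + (1 / 2 : ℝ) • !![2, -1, -1; -1, 1, 0; -1, 0, 1])).PosSemidef := by
  intro h
  have hx := h.dotProduct_mulVec_nonneg ![1, 1, -2]
  rw [fMap_path₁, fMap_path₂, fMap_midpoint] at hx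
  norm_num [Matrix.mulVec, dotProduct, Matrix.mul_apply, Fin.sum_univ_succ] at hx


theorem disagreement_map_not_matrix_convex :
    ¬ ((1 / 2 : ℝ) • fMap !![1, -1, 0; -1, 2, -1; 0, -1, 1]
        + (1 / 2 : ℝ) • fMap !![2, -1, -1; -1, 1, 0; -1, 0, 1]
        - fMap ((1 / 2 : ℝ) • !![1, -1, 0; -1, 2, -1; 0, -1, 1]
            + (1 / 2 : ℝ) • !![2, -1, -1; -1, 1, 0; -1, 0, 1])).PosSemidef
    ∧ ¬ (∀ L₁ L₂ : Matrix (Fin 3) (Fin 3) ℝ,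
          L₁.IsSymm → (∀ i j, i ≠ j → L₁ i j ≤ 0) → L₁ *ᵥ (fun _ => (1 : ℝ)) = 0 →
          L₂.IsSymm → (∀ i j, i ≠ j → L₂ i j ≤ 0) → L₂ *ᵥ (fun _ => (1 : ℝ)) = 0 →
          ∀ l ∈ Set.Ioo (0 : ℝ) 1,
            (l • fMap L₁ + (1 - l) • fMap L₂ - fMap (l • L₁ + (1 - l) • L₂)).PosSemidef) := by
  refine ⟨not_posSemidef_midpoint_gap, fun h => not_posSemidef_midpoint_gap ?_⟩
  have key := h !![1, -1, 0; -1, 2, -1; 0, -1, 1] !![2, -1, -1; -1, 1, 0; -1, 0, 1]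
    (by ext i j; fin_cases i <;> fin_cases j <;> simp)
    (by intro i j hij; fin_cases i <;> fin_cases j <;> simp at hij ⊢)
    (by ext i; fin_cases i <;> norm_num [Matrix.mulVec, dotProduct, Fin.sum_univ_succ])
    (by ext i j; fin_cases i <;> fin_cases j <;> simp)
    (by intro i j hij; fin_cases i <;> fin_cases j <;> simp at hij ⊢)
    (by ext i; fin_cases i <;> norm_num [Matrix.mulVec, dotProduct, Fin.sum_univ_succ])
    (1 / 2) (by norm_num)
  rwa [show (1 : ℝ) - 1 / 2 = 1 / 2 by norm_num] at key
end

section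
/- There exist nonnegative edge-weight vectors w₁, w₂ ∈ ℝ³ on the complete graph on 3 nodes, a vector s ∈ ℝ³, and λ ∈ (0,1) such that g(λw₁ + (1−λ)w₂) > λ·g(w₁) + (1−λ)·g(w₂), where g(w) = sᵀ(I+L(w))^{-1}·L(w)·(I+L(w))^{-1}·s and L(w) = B·diag(w)·Bᵀ is the Laplacian with incidence matrix B of the complete graph on 3 nodes. Hence the disagreement at the Friedkin–Johnsen equilibrium, viewed as a function of the edge weights for fixed innate opinions, is not convex. -/
/-!
Take all edge weights equal to `t` and `s = (1, -1, 0)`. Since `s` is orthogonal to the all-ones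
vector, it is an eigenvector of the Laplacian `t • (3 I - J)` with eigenvalue `3 t`, so the
disagreement is `2 * (3 t) / (1 + 3 t) ^ 2` (`disagreement_const`). The function `x / (1 + x) ^ 2`
is strictly concave on `[0, 2]`; the points `x = 0`, `x = 2` and their midpoint `x = 1`
(that is, `t = 0`, `2 / 3`, `1 / 3`) violate convexity.
-/

open Matrix BigOperators

lemma laplacian_const
    (B : Matrix (Fin 3) {p : Fin 3 × Fin 3 // p.1 < p.2} ℝ)
    (hB : ∀ i e, B i e = (if i = e.val.1 then (1 : ℝ) else 0) - (if i = e.val.2 then 1 else 0))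
    (t : ℝ) (w : {p : Fin 3 × Fin 3 // p.1 < p.2} → ℝ) (hw : ∀ e, w e = t) :
    B * Matrix.diagonal w * Bᵀ = !![2*t, -t, -t; -t, 2*t, -t; -t, -t, 2*t] := by
  have hu : (Finset.univ : Finset {p : Fin 3 × Fin 3 // p.1 < p.2}) =
      {⟨(0, 1), by decide⟩, ⟨(0, 2), by decide⟩, ⟨(1, 2), by decide⟩} := by decide
  ext i j
  rw [Matrix.mul_apply, hu]
  fin_cases i <;> fin_cases j <;>
    simp [Matrix.mul_diagonal, hB, hw] <;> ring

lemma disagreement_const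
    (B : Matrix (Fin 3) {p : Fin 3 × Fin 3 // p.1 < p.2} ℝ)
    (hB : ∀ i e, B i e = (if i = e.val.1 then (1 : ℝ) else 0) - (if i = e.val.2 then 1 else 0))
    (t : ℝ) (ht : 0 ≤ t) (w : {p : Fin 3 × Fin 3 // p.1 < p.2} → ℝ) (hw : ∀ e, w e = t) :
    ![1, -1, 0] ⬝ᵥ (((1 + B * Matrix.diagonal w * Bᵀ)⁻¹
        * (B * Matrix.diagonal w * Bᵀ)
        * (1 + B * Matrix.diagonal w * Bᵀ)⁻¹) *ᵥ ![1, -1, 0])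
      = 2 * (3 * t) / (1 + 3 * t) ^ 2 := by
  rw [laplacian_const B hB t w hw]
  set L : Matrix (Fin 3) (Fin 3) ℝ := !![2*t, -t, -t; -t, 2*t, -t; -t, -t, 2*t] with hL
  have hc : (1 + 3 * t) ≠ 0 := by positivity
  have hLs : L *ᵥ ![1, -1, 0] = (3 * t) • ![1, -1, 0] := by
    ext i
    fin_cases i <;> simp [hL, Matrix.mulVec, dotProduct, Fin.sum_univ_three] <;> ring
  have hdet : (1 + L).det = (1 + 3 * t) ^ 2 := by
    rw [Matrix.det_fin_three]
    simp [hL]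
    ring
  have hunit : IsUnit (1 + L).det := by
    rw [hdet]
    exact (pow_ne_zero 2 hc).isUnit
  have hinv : (1 + L)⁻¹ *ᵥ ![1, -1, 0] = (1 + 3 * t)⁻¹ • ![1, -1, 0] := by
    have h : (1 + L) *ᵥ ((1 + 3 * t)⁻¹ • ![1, -1, 0]) = ![1, -1, 0] := by
      have h1 : (1 + L) *ᵥ ![1, -1, 0] = (1 + 3 * t) • ![1, -1, 0] := by
        rw [Matrix.add_mulVec, Matrix.one_mulVec, hLs, add_smul, one_smul]
      rw [Matrix.mulVec_smul, h1, smul_smul, inv_mul_cancel₀ hc, one_smul]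
    calc (1 + L)⁻¹ *ᵥ ![1, -1, 0]
        = (1 + L)⁻¹ *ᵥ ((1 + L) *ᵥ ((1 + 3 * t)⁻¹ • ![1, -1, 0])) := by rw [h]
      _ = _ := by rw [Matrix.mulVec_mulVec, Matrix.nonsing_inv_mul _ hunit, Matrix.one_mulVec]
  rw [← Matrix.mulVec_mulVec, ← Matrix.mulVec_mulVec, hinv, Matrix.mulVec_smul, hLs,
    Matrix.mulVec_smul, Matrix.mulVec_smul, hinv]
  simp [dotProduct, Fin.sum_univ_three]
  field_simp
  ring

theorem disagreement_not_convex_in_edge_weights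
    (B : Matrix (Fin 3) {p : Fin 3 × Fin 3 // p.1 < p.2} ℝ)
    (hB : ∀ i e, B i e = (if i = e.val.1 then (1 : ℝ) else 0) - (if i = e.val.2 then 1 else 0)) :
    ∃ (w₁ w₂ : {p : Fin 3 × Fin 3 // p.1 < p.2} → ℝ) (s : Fin 3 → ℝ) (l : ℝ),
      (∀ e, 0 ≤ w₁ e) ∧ (∀ e, 0 ≤ w₂ e) ∧ l ∈ Set.Ioo (0 : ℝ) 1 ∧
      (fun w : {p : Fin 3 × Fin 3 // p.1 < p.2} → ℝ =>
          s ⬝ᵥ (((1 + B * Matrix.diagonal w * Bᵀ)⁻¹ * (B * Matrix.diagonal w * Bᵀ)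
            * (1 + B * Matrix.diagonal w * Bᵀ)⁻¹) *ᵥ s)) (l • w₁ + (1 - l) • w₂)
        > l * (fun w : {p : Fin 3 × Fin 3 // p.1 < p.2} → ℝ =>
              s ⬝ᵥ (((1 + B * Matrix.diagonal w * Bᵀ)⁻¹ * (B * Matrix.diagonal w * Bᵀ)
                * (1 + B * Matrix.diagonal w * Bᵀ)⁻¹) *ᵥ s)) w₁
          + (1 - l) * (fun w : {p : Fin 3 × Fin 3 // p.1 < p.2} → ℝ =>
              s ⬝ᵥ (((1 + B * Matrix.diagonal w * Bᵀ)⁻¹ * (B * Matrix.diagonal w * Bᵀ)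
                * (1 + B * Matrix.diagonal w * Bᵀ)⁻¹) *ᵥ s)) w₂ := by
  refine ⟨fun _ => 0, fun _ => 2 / 3, ![1, -1, 0], 1 / 2, fun _ => le_rfl,
    fun _ => by norm_num, by norm_num, ?_⟩
  beta_reduce
  rw [disagreement_const B hB 0 le_rfl (fun _ => 0) (fun _ => rfl),
    disagreement_const B hB (2 / 3) (by norm_num) (fun _ => 2 / 3) (fun _ => rfl),
    disagreement_const B hB (1 / 3) (by norm_num) _ (fun _ => by simp; norm_num)]
  norm_num
end

section
/- Let L be a real symmetric positive semidefinite n×n matrix with Tr(L) = 2m > 0, let s ∈ ℝ^n, let ε ∈ (0,1), and let L̃ be a symmetric positive semidefinite matrix with (1−ε)·xᵀLx ≤ xᵀL̃x ≤ (1+ε)·xᵀLx for all x ∈ ℝ^n. Set c = 2m/Tr(L̃). Then the rescaled matrix c·L̃ satisfies Tr(c·L̃) = 2m and sᵀ(I + c·L̃)^{-1}s ≤ ((1+ε)/(1−ε))·sᵀ(I+L)^{-1}s. -/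
/-!
Inversion reverses the Loewner order. Testing the sparsifier inequalities on the standard basis
gives `(1 - ε) Tr L ≤ Tr L̃ ≤ (1 + ε) Tr L`, so `c = Tr L / Tr L̃ ≥ 1 / (1 + ε)` and hence
`c L̃ ≥ k L` with `k = (1 - ε) / (1 + ε) ≤ 1`. Therefore `1 + c L̃ ≥ k (1 + L)`, and
`inv_quadForm_le` turns this into `k sᵀ(1 + c L̃)⁻¹s ≤ sᵀ(1 + L)⁻¹s`.
-/

open Matrix BigOperators

/-- Antitonicity of the inverse, `k A ≤ B → k B⁻¹ ≤ A⁻¹`, at the level of quadratic forms. With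
`x = A⁻¹ s` and `y = B⁻¹ s`, it follows by expanding `0 ≤ (k y - x)ᵀ A (k y - x)`. -/
lemma inv_quadForm_le {n : ℕ} {A B : Matrix (Fin n) (Fin n) ℝ} (hA : A.PosDef) (hB : B.PosDef)
    {k : ℝ} (hk : 0 < k) (h : ∀ y : Fin n → ℝ, k * (y ⬝ᵥ (A *ᵥ y)) ≤ y ⬝ᵥ (B *ᵥ y))
    (s : Fin n → ℝ) : k * (s ⬝ᵥ (B⁻¹ *ᵥ s)) ≤ s ⬝ᵥ (A⁻¹ *ᵥ s) := by
  have hAu : IsUnit A.det := hA.det_pos.ne'.isUnit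
  have hBu : IsUnit B.det := hB.det_pos.ne'.isUnit
  obtain ⟨x, hx⟩ : ∃ x, x = A⁻¹ *ᵥ s := ⟨_, rfl⟩
  obtain ⟨y, hy⟩ : ∃ y, y = B⁻¹ *ᵥ s := ⟨_, rfl⟩
  have hAx : A *ᵥ x = s := by rw [hx, mulVec_mulVec, mul_nonsing_inv _ hAu, one_mulVec]
  have hBy : B *ᵥ y = s := by rw [hy, mulVec_mulVec, mul_nonsing_inv _ hBu, one_mulVec]
  have hsymm : x ⬝ᵥ (A *ᵥ y) = y ⬝ᵥ s := by
    have hT : Aᵀ = A := by simpa [conjTranspose_eq_transpose_of_trivial] using hA.isHermitian.eq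
    rw [dotProduct_mulVec, ← mulVec_transpose, hT, hAx, dotProduct_comm]
  have hq : 0 ≤ (k • y - x) ⬝ᵥ (A *ᵥ (k • y - x)) := by
    simpa using hA.posSemidef.dotProduct_mulVec_nonneg (k • y - x)
  simp only [mulVec_sub, mulVec_smul, sub_dotProduct, dotProduct_sub, smul_dotProduct,
    dotProduct_smul, smul_eq_mul, hAx, hsymm] at hq
  have hyB := h y
  rw [hBy] at hyB
  rw [← hx, ← hy, dotProduct_comm s y, dotProduct_comm s x]
  nlinarith [mul_le_mul_of_nonneg_left hyB hk.le]

theorem rescaled_sparsifier_near_optimal {n : ℕ} (L Lt : Matrix (Fin n) (Fin n) ℝ)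
    (hL : L.PosSemidef) (hLt : Lt.PosSemidef) (m : ℝ) (hm0 : 0 < m)
    (htr : L.trace = 2 * m) (s : Fin n → ℝ) (ε : ℝ) (hε : ε ∈ Set.Ioo (0 : ℝ) 1)
    (hsp : ∀ x : Fin n → ℝ,
      (1 - ε) * (x ⬝ᵥ (L *ᵥ x)) ≤ x ⬝ᵥ (Lt *ᵥ x)
        ∧ x ⬝ᵥ (Lt *ᵥ x) ≤ (1 + ε) * (x ⬝ᵥ (L *ᵥ x)))
    (c : ℝ) (hc : c = 2 * m / Lt.trace) :
    (c • Lt).trace = 2 * m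
    ∧ s ⬝ᵥ ((1 + c • Lt)⁻¹ *ᵥ s) ≤ ((1 + ε) / (1 - ε)) * (s ⬝ᵥ ((1 + L)⁻¹ *ᵥ s)) := by
  obtain ⟨h0, h1⟩ := hε
  have hdiag : ∀ i, (1 - ε) * L i i ≤ Lt i i ∧ Lt i i ≤ (1 + ε) * L i i := fun i => by
    simpa using hsp (Pi.single i 1)
  have hlo : (1 - ε) * L.trace ≤ Lt.trace := by
    simp only [trace, diag_apply, Finset.mul_sum]
    exact Finset.sum_le_sum fun i _ => (hdiag i).1
  have hhi : Lt.trace ≤ (1 + ε) * L.trace := by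
    simp only [trace, diag_apply, Finset.mul_sum]
    exact Finset.sum_le_sum fun i _ => (hdiag i).2
  rw [htr] at hlo hhi
  have hpos : 0 < Lt.trace := lt_of_lt_of_le (mul_pos (by linarith) (by linarith)) hlo
  refine ⟨by rw [trace_smul, hc, smul_eq_mul, div_mul_cancel₀ _ hpos.ne'], ?_⟩
  have hc1 : 1 / (1 + ε) ≤ c := by
    rw [hc, div_le_div_iff₀ (by linarith) hpos]
    linarith
  have hc0 : 0 ≤ c := le_trans (by positivity) hc1
  have hk : 0 < (1 - ε) / (1 + ε) := div_pos (by linarith) (by linarith)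
  have hk1 : (1 - ε) / (1 + ε) ≤ 1 := by
    rw [div_le_one (by linarith)]
    linarith
  have key := inv_quadForm_le (PosDef.one.add_posSemidef hL)
    (PosDef.one.add_posSemidef (hLt.smul hc0)) hk (fun y => by
      have hyy : 0 ≤ y ⬝ᵥ y := by simpa using dotProduct_star_self_nonneg y
      have hLy : 0 ≤ y ⬝ᵥ (L *ᵥ y) := by simpa using hL.dotProduct_mulVec_nonneg y
      simp only [add_mulVec, one_mulVec, smul_mulVec, dotProduct_add, dotProduct_smul,
        smul_eq_mul]
      have hI := mul_le_of_le_one_left hyy hk1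
      have hcL : (1 - ε) / (1 + ε) * (y ⬝ᵥ (L *ᵥ y)) ≤ c * (y ⬝ᵥ (Lt *ᵥ y)) := by
        calc (1 - ε) / (1 + ε) * (y ⬝ᵥ (L *ᵥ y))
            = 1 / (1 + ε) * ((1 - ε) * (y ⬝ᵥ (L *ᵥ y))) := by ring
          _ ≤ c * (y ⬝ᵥ (Lt *ᵥ y)) :=
            mul_le_mul hc1 (hsp y).1 (mul_nonneg (by linarith) hLy) hc0
      linarith) s
  rw [← inv_div, ← div_eq_inv_mul, le_div_iff₀ hk, mul_comm]
  exact key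
end
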